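/- arXiv:2311.18680 — 5 statements merged into one kernel-verified Lean document; each statement's English description precedes it below -/
import Mathlib

section
/- Let ε₀ > 0 and let Φ : (0, ε₀] → B(𝓗) be a continuously differentiable function (in operator norm) with values in the bounded operators on a complex Hilbert space 𝓗. Let θ₁, θ₂ : (0, ε₀) → [0, ∞) be measurable functions with ∫₀^{ε₀} θ_k(ε) dε < ∞ for k = 1, 2, and let γ ≥ 0. If ‖Φ'(ε)‖ ≤ θ₁(ε) + θ₂(ε)·‖Φ(ε)‖^{1/2} + γ·‖Φ(ε)‖ for all ε ∈ (0, ε₀), then for every ε ∈ (0, ε₀]: ‖Φ(ε)‖ ≤ [ (‖Φ(ε₀)‖ + ∫₀^{ε₀} θ₁(ε') dε')^{1/2} + ∫₀^{ε₀} θ₂(ε') dε' ]² · e^{γ ε₀}. -/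
open MeasureTheory Set

/-- Method of differential inequality: if `Φ : (0, ε₀] → B(𝓗)` is continuously
differentiable with `‖Φ'(ε)‖ ≤ θ₁(ε) + θ₂(ε)·‖Φ(ε)‖^{1/2} + γ·‖Φ(ε)‖`, where the
`θ_k ≥ 0` are integrable on `(0, ε₀)` and `γ ≥ 0`, then
`‖Φ(ε)‖ ≤ ((‖Φ(ε₀)‖ + ∫₀^{ε₀} θ₁)^{1/2} + ∫₀^{ε₀} θ₂)² · e^{γ ε₀}` for all `ε ∈ (0, ε₀]`. -/
theorem method_of_differential_inequality
    {𝓗 : Type*} [NormedAddCommGroup 𝓗] [InnerProductSpace ℂ 𝓗]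
    (ε₀ : ℝ) (hε₀ : 0 < ε₀)
    (Φ Φ' : ℝ → (𝓗 →L[ℂ] 𝓗))
    (hderiv : ∀ ε ∈ Ioc (0 : ℝ) ε₀, HasDerivWithinAt Φ (Φ' ε) (Ioc (0 : ℝ) ε₀) ε)
    (hcont : ContinuousOn Φ' (Ioc (0 : ℝ) ε₀))
    (θ₁ θ₂ : ℝ → ℝ) (hθ₁meas : Measurable θ₁) (hθ₂meas : Measurable θ₂)
    (hθ₁nonneg : ∀ ε ∈ Ioo (0 : ℝ) ε₀, 0 ≤ θ₁ ε)
    (hθ₂nonneg : ∀ ε ∈ Ioo (0 : ℝ) ε₀, 0 ≤ θ₂ ε)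
    (hθ₁int : IntegrableOn θ₁ (Ioo (0 : ℝ) ε₀))
    (hθ₂int : IntegrableOn θ₂ (Ioo (0 : ℝ) ε₀))
    (γ : ℝ) (hγ : 0 ≤ γ)
    (hineq : ∀ ε ∈ Ioo (0 : ℝ) ε₀,
      ‖Φ' ε‖ ≤ θ₁ ε + θ₂ ε * Real.sqrt ‖Φ ε‖ + γ * ‖Φ ε‖) :
    ∀ ε ∈ Ioc (0 : ℝ) ε₀,
      ‖Φ ε‖ ≤ (Real.sqrt (‖Φ ε₀‖ + ∫ ε' in Ioo (0 : ℝ) ε₀, θ₁ ε') +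
          ∫ ε' in Ioo (0 : ℝ) ε₀, θ₂ ε') ^ 2 * Real.exp (γ * ε₀) := by
  intro a ha
  have ha0 : 0 < a := ha.1
  have hsub : Icc a ε₀ ⊆ Ioc 0 ε₀ := fun x hx => ⟨ha0.trans_le hx.1, hx.2⟩
  set A := ∫ ε' in Ioo (0 : ℝ) ε₀, θ₁ ε' with hA
  set B := ∫ ε' in Ioo (0 : ℝ) ε₀, θ₂ ε' with hB
  have hA0 : 0 ≤ A := setIntegral_nonneg measurableSet_Ioo hθ₁nonneg
  have hB0 : 0 ≤ B := setIntegral_nonneg measurableSet_Ioo hθ₂nonneg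
  -- continuous extension of the norm of the derivative
  obtain ⟨n, hn, hneq⟩ : ∃ n : ℝ → ℝ, Continuous n ∧ ∀ x ∈ Icc a ε₀, n x = ‖Φ' x‖ := by
    have hc : ContinuousOn (fun x => ‖Φ' x‖) (Icc a ε₀) := (hcont.mono hsub).norm
    refine ⟨IccExtend ha.2 ((Icc a ε₀).domRestrict fun x => ‖Φ' x‖),
      hc.domRestrict.Icc_extend', fun x hx => ?_⟩
    rw [IccExtend_of_mem _ _ hx]
    rfl
  have hΦc : ContinuousOn Φ (Icc a ε₀) :=
    fun x hx => ((hderiv x (hsub hx)).continuousWithinAt).mono hsub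
  let W : ℝ → ℝ := fun s => ‖Φ ε₀‖ - ∫ x in ε₀..s, n x
  have hW : ∀ s, HasDerivAt W (-n s) s := fun s =>
    ((hn.integral_hasStrictDerivAt ε₀ s).hasDerivAt).const_sub _
  have hWend : W ε₀ = ‖Φ ε₀‖ := by simp [W]
  have huW : ∀ s ∈ Icc a ε₀, ‖Φ s‖ ≤ W s := by
    intro s hs
    have key := image_norm_le_of_norm_deriv_right_le_deriv_boundary
      (f := fun x => Φ x - Φ s) (f' := Φ') (a := s) (b := ε₀)
      (B := fun x => ∫ y in s..x, n y) (B' := n)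
      ((hΦc.mono (Icc_subset_Icc_left hs.1)).sub continuousOn_const)
      (fun x hx => by
        have hx' : x ∈ Icc a ε₀ := ⟨hs.1.trans hx.1, hx.2.le⟩
        refine ((hderiv x (hsub hx')).sub_const (Φ s)).mono_of_mem_nhdsWithin ?_
        refine Filter.mem_of_superset (Icc_mem_nhdsGE hx.2) ?_
        exact fun y hy => hsub ⟨hx'.1.trans hy.1, hy.2⟩)
      (by simp)
      (fun x => (hn.integral_hasStrictDerivAt s x).hasDerivAt)
      (fun x hx => (hneq x ⟨hs.1.trans hx.1, hx.2.le⟩).ge)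
      (right_mem_Icc.2 hs.2)
    have h1 : ‖Φ s‖ ≤ ‖Φ ε₀‖ + ‖Φ ε₀ - Φ s‖ := by
      have := norm_sub_le (Φ ε₀) (Φ ε₀ - Φ s)
      simpa using this
    have h2 : (∫ x in ε₀..s, n x) = -∫ x in s..ε₀, n x := intervalIntegral.integral_symm _ _
    simp only [W, h2]
    linarith
  let v : ℝ → ℝ := fun s => Real.exp (γ * (s - ε₀)) * W s
  have hv : ∀ s, HasDerivAt v (γ * v s - Real.exp (γ * (s - ε₀)) * n s) s := by
    intro s
    have h1 : HasDerivAt (fun s => Real.exp (γ * (s - ε₀)))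
        (Real.exp (γ * (s - ε₀)) * (γ * 1)) s :=
      (((hasDerivAt_id s).sub_const ε₀).const_mul γ).exp
    have h2 := h1.mul (hW s)
    refine h2.congr_deriv ?_
    simp only [v]
    ring
  have hvc : Continuous v := continuous_iff_continuousAt.2 fun s => (hv s).continuousAt
  obtain ⟨m, hm, hmax⟩ := isCompact_Icc.exists_isMaxOn (nonempty_Icc.2 ha.2) hvc.continuousOn
  have hM0 : 0 ≤ v m := mul_nonneg (Real.exp_pos _).le ((norm_nonneg _).trans (huW m hm))
  set r := Real.sqrt (v m) with hr
  have hr0 : 0 ≤ r := Real.sqrt_nonneg _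
  have hrr : r * r = v m := Real.mul_self_sqrt hM0
  have hioo : Ioo m ε₀ ⊆ Ioo 0 ε₀ := Ioo_subset_Ioo_left (ha0.trans_le hm.1).le
  have hi1 : IntegrableOn θ₁ (Ioo m ε₀) := hθ₁int.mono_set hioo
  have hi2 : IntegrableOn θ₂ (Ioo m ε₀) := hθ₂int.mono_set hioo
  have hmain := intervalIntegral.sub_le_integral_of_hasDeriv_right_of_le
    (g := fun s => -v s) (g' := fun s => -(γ * v s - Real.exp (γ * (s - ε₀)) * n s))
    (φ := fun s => θ₁ s + θ₂ s * r) hm.2 hvc.neg.continuousOn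
    (fun x _ => (hv x).neg.hasDerivWithinAt)
    (by
      rw [integrableOn_Icc_iff_integrableOn_Ioo]
      exact hi1.add (hi2.mul_const r))
    (fun x hx => by
      have hx0 := hioo hx
      have hx' : x ∈ Icc a ε₀ := ⟨hm.1.trans hx.1.le, hx.2.le⟩
      have hin := hineq x hx0
      have hu := huW x hx'
      have hle : v x ≤ v m := hmax hx'
      have he0 := Real.exp_pos (γ * (x - ε₀))
      have he1 : Real.exp (γ * (x - ε₀)) ≤ 1 :=
        Real.exp_le_one_iff.2 (mul_nonpos_of_nonneg_of_nonpos hγ (by linarith [hx.2]))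
      rw [hneq x hx']
      simp only [v] at hle ⊢
      generalize Real.exp (γ * (x - ε₀)) = e at *
      have hsq : e * Real.sqrt ‖Φ x‖ ≤ r := by
        apply Real.le_sqrt_of_sq_le
        rw [mul_pow, Real.sq_sqrt (norm_nonneg _)]
        have h3 : e ^ 2 ≤ e := by nlinarith
        calc e ^ 2 * ‖Φ x‖ ≤ e * W x := mul_le_mul h3 hu (norm_nonneg _) he0.le
          _ ≤ _ := hle
      have h4 : e * ‖Φ' x‖ ≤ e * (θ₁ x + θ₂ x * Real.sqrt ‖Φ x‖ + γ * ‖Φ x‖) :=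
        mul_le_mul_of_nonneg_left hin he0.le
      have h5 : e * θ₁ x ≤ θ₁ x := mul_le_of_le_one_left (hθ₁nonneg x hx0) he1
      have h6 : θ₂ x * (e * Real.sqrt ‖Φ x‖) ≤ θ₂ x * r :=
        mul_le_mul_of_nonneg_left hsq (hθ₂nonneg x hx0)
      have h7 : γ * (e * ‖Φ x‖) ≤ γ * (e * W x) :=
        mul_le_mul_of_nonneg_left (mul_le_mul_of_nonneg_left hu he0.le) hγ
      linarith)
  have hint : (∫ y in m..ε₀, (θ₁ y + θ₂ y * r)) ≤ A + B * r := by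
    rw [intervalIntegral.integral_of_le hm.2, integral_Ioc_eq_integral_Ioo,
      integral_add hi1 (hi2.mul_const r), integral_mul_const]
    have h1 : (∫ y in Ioo m ε₀, θ₁ y) ≤ A :=
      setIntegral_mono_set hθ₁int
        (ae_restrict_of_forall_mem measurableSet_Ioo hθ₁nonneg) hioo.eventuallyLE
    have h2 : (∫ y in Ioo m ε₀, θ₂ y) ≤ B :=
      setIntegral_mono_set hθ₂int
        (ae_restrict_of_forall_mem measurableSet_Ioo hθ₂nonneg) hioo.eventuallyLE
    exact add_le_add h1 (mul_le_mul_of_nonneg_right h2 hr0)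
  have hvend : v ε₀ = ‖Φ ε₀‖ := by simp [v, hWend]
  have hq : r * r ≤ (‖Φ ε₀‖ + A) + B * r := by
    rw [hrr]
    simp only [hvend] at hmain
    linarith
  have hC0 : 0 ≤ ‖Φ ε₀‖ + A := add_nonneg (norm_nonneg _) hA0
  set q := Real.sqrt (‖Φ ε₀‖ + A) with hqdef
  have hq0 : 0 ≤ q := Real.sqrt_nonneg _
  have hqq : q * q = ‖Φ ε₀‖ + A := Real.mul_self_sqrt hC0
  have hrle : r ≤ q + B := by
    by_contra! hcon
    nlinarith
  have hva : v a ≤ (q + B) ^ 2 := by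
    have h1 : v a ≤ v m := hmax (left_mem_Icc.2 ha.2)
    nlinarith
  have hWa : W a = v a * Real.exp (γ * (ε₀ - a)) := by
    simp only [v]
    rw [mul_right_comm, ← Real.exp_add]
    have : γ * (a - ε₀) + γ * (ε₀ - a) = 0 := by ring
    simp [this]
  calc ‖Φ a‖ ≤ W a := huW a (left_mem_Icc.2 ha.2)
    _ = v a * Real.exp (γ * (ε₀ - a)) := hWa
    _ ≤ (q + B) ^ 2 * Real.exp (γ * ε₀) := by
      apply mul_le_mul hva _ (Real.exp_pos _).le (sq_nonneg _)
      apply Real.exp_le_exp.2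
      apply mul_le_mul_of_nonneg_left _ hγ
      linarith
end

section
/- Let 𝓗 be a complex Hilbert space and U a strongly continuous unitary representation of the additive group ℝᵏ on 𝓗. Let f ∈ 𝓗, C ≥ 0, and let ρ ∈ L¹(ℝᵏ) be a nonnegative integrable function with ρ(λ) ≤ C for almost every λ ∈ ℝᵏ, such that ⟪f, U(x) f⟫ = ∫_{ℝᵏ} e^{i x·λ} ρ(λ) dλ for every x ∈ ℝᵏ. Then for every g ∈ 𝓗: ∫_{ℝᵏ} |⟪f, U(x) g⟫|² dx ≤ (2π)ᵏ C ‖g‖². -/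
open MeasureTheory
open scoped ENNReal NNReal InnerProductSpace

section Aux

open FourierTransform SchwartzMap Filter Topology
open scoped ContDiff

variable {V : Type*} [NormedAddCommGroup V] [InnerProductSpace ℝ V] [FiniteDimensional ℝ V]
  [MeasurableSpace V] [BorelSpace V]

theorem aux_continuous_fourier {φ : V → ℂ} (h1 : Integrable φ) : Continuous (𝓕 φ) :=
  VectorFourier.fourierIntegral_continuous Real.continuous_fourierChar
    (innerSL ℝ).continuous₂ h1

/-- The `L²` Fourier transform is the integral one on `L¹ ∩ L²`. -/
theorem aux_fourier_ae {φ : V → ℂ} (h1 : Integrable φ) (h2 : MemLp φ 2) :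
    ((𝓕 (h2.toLp φ) : Lp (α := V) ℂ 2) : V → ℂ) =ᵐ[volume] 𝓕 φ := by
  apply ae_eq_of_integral_contDiff_smul_eq
  · exact (Lp.memLp _).locallyIntegrable (by norm_num)
  · exact (aux_continuous_fourier h1).locallyIntegrable
  · intro g g_smooth g_cpt
    have hg₁ : HasCompactSupport (Complex.ofRealCLM ∘ g) := g_cpt.comp_left rfl
    have hg₂ : ContDiff ℝ ∞ (Complex.ofRealCLM ∘ g) := by fun_prop
    set G : 𝓢(V, ℂ) := hg₁.toSchwartzMap hg₂ with hG
    have hGa : ∀ x, G x = (g x : ℂ) := fun x => rfl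
    have e1 := congrArg (fun T => T G) (Lp.fourier_toTemperedDistribution_eq (h2.toLp φ))
    simp only [TemperedDistribution.fourier_apply, Lp.toTemperedDistribution_apply] at e1
    have e2 := VectorFourier.integral_fourierIntegral_smul_eq_flip (L := innerₗ V) (μ := volume)
      (ν := volume) (f := (G : V → ℂ)) (g := φ) Real.continuous_fourierChar
      (innerSL ℝ).continuous₂ G.integrable h1
    rw [flip_innerₗ] at e2
    have e3 : ∫ x, (𝓕 G) x • (h2.toLp φ) x = ∫ x, (𝓕 (G : V → ℂ)) x • φ x := by
      apply integral_congr_ae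
      filter_upwards [h2.coeFn_toLp] with x hx
      rw [hx, SchwartzMap.fourier_coe]
    calc ∫ x, g x • ((𝓕 (h2.toLp φ) : Lp ℂ 2 (volume : Measure V)) : V → ℂ) x
        = ∫ x, G x • ((𝓕 (h2.toLp φ) : Lp ℂ 2 (volume : Measure V)) : V → ℂ) x := by
          simp [hGa]
      _ = ∫ x, (𝓕 (G : V → ℂ)) x • φ x := by rw [← e1, e3]
      _ = ∫ x, G x • (𝓕 φ) x := e2
      _ = _ := by simp [hGa]

theorem aux_plancherel {φ : V → ℂ} (h1 : Integrable φ) (h2 : MemLp φ 2) :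
    Integrable (fun x => ‖𝓕 φ x‖ ^ 2) ∧ ∫ x, ‖𝓕 φ x‖ ^ 2 = ∫ x, ‖φ x‖ ^ 2 := by
  have hae := aux_fourier_ae h1 h2
  have hm : MemLp (𝓕 φ) 2 := (memLp_congr_ae hae).1 (Lp.memLp _)
  refine ⟨hm.integrable_norm_pow (by norm_num), ?_⟩
  have hn : ∀ {ψ : V → ℂ} (F : Lp (α := V) ℂ 2) (h : (F : V → ℂ) =ᵐ[volume] ψ),
      ((∫ x, ‖ψ x‖ ^ 2 : ℝ) : ℂ) = ((‖F‖ ^ 2 : ℝ) : ℂ) := by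
    intro ψ F h
    have := inner_self_eq_norm_sq_to_K (𝕜 := ℂ) F
    rw [MeasureTheory.L2.inner_def] at this
    push_cast
    rw [← integral_complex_ofReal]
    refine Eq.trans ?_ this
    apply integral_congr_ae
    filter_upwards [h] with x hx
    rw [hx, inner_self_eq_norm_sq_to_K]
    simp
  have a := hn _ hae
  have b := hn _ h2.coeFn_toLp
  rw [Lp.norm_fourier_eq, ← b] at a
  exact_mod_cast a

theorem aux_swap {φ ψ : V → ℂ} (hφ : Integrable φ) (hψ : Integrable ψ) (K : V → V → ℂ)
    (hK : Continuous (Function.uncurry K)) (hK1 : ∀ x l, ‖K x l‖ ≤ 1) :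
    ∫ x, φ x * ∫ l, K x l * ψ l = ∫ l, ψ l * ∫ x, K x l * φ x := by
  have hI : Integrable (fun p : V × V => K p.1 p.2 * (φ p.1 * ψ p.2))
      ((volume : Measure V).prod volume) :=
    (hφ.mul_prod hψ).bdd_mul (c := 1) hK.aestronglyMeasurable
      (Eventually.of_forall fun p => hK1 _ _)
  calc ∫ x, φ x * ∫ l, K x l * ψ l = ∫ x, ∫ l, K x l * (φ x * ψ l) := by
        congr 1; ext x; rw [← integral_const_mul]; congr 1; ext l; ring
    _ = ∫ l, ∫ x, K x l * (φ x * ψ l) := integral_integral_swap hI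
    _ = _ := by
        congr 1; ext l; rw [← integral_const_mul]; congr 1; ext x; ring

theorem aux_norm_exp (t : ℝ) : ‖Complex.exp (Complex.I * (t : ℂ))‖ = 1 := by
  rw [mul_comm]; exact Complex.norm_exp_ofReal_mul_I t

/-- Main quadratic form estimate. -/
theorem aux_quad {φ : V → ℂ} (h1 : Integrable φ) (h2 : MemLp φ 2)
    {C : ℝ} {ρ : V → ℝ} (hρint : Integrable ρ)
    (hρ0 : ∀ᵐ l ∂(volume : Measure V), 0 ≤ ρ l) (hρC : ∀ᵐ l ∂(volume : Measure V), ρ l ≤ C) :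
    ‖∫ x, starRingEnd ℂ (φ x) * ∫ y, φ y *
      ∫ l, Complex.exp (Complex.I * (⟪x - y, l⟫_ℝ : ℂ)) * (ρ l : ℂ)‖
      ≤ (2 * Real.pi) ^ Module.finrank ℝ V * C * ∫ x, ‖φ x‖ ^ 2 := by
  set Φ : V → ℂ := fun l => 𝓕 φ ((2 * Real.pi)⁻¹ • l) with hΦ
  have hpi : (2 * Real.pi) ≠ 0 := by positivity
  have hΦe : ∀ l, Φ l = ∫ y, Complex.exp (Complex.I * ((-⟪y, l⟫_ℝ : ℝ) : ℂ)) * φ y := by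
    intro l
    simp only [hΦ, Real.fourier_eq', smul_eq_mul]
    congr 1; ext y
    rw [inner_smul_right, mul_comm _ Complex.I]
    congr 4
    field_simp
  have hΦc : Continuous Φ := (aux_continuous_fourier h1).comp (by fun_prop)
  have hΦb : ∀ l, ‖Φ l‖ ≤ ∫ y, ‖φ y‖ := by
    intro l
    rw [hΦe]
    refine (norm_integral_le_integral_norm _).trans (le_of_eq ?_)
    simp only [norm_mul, aux_norm_exp, one_mul]
  have hρ' : Integrable (fun l => (ρ l : ℂ)) := hρint.ofReal
  have hin : ∀ x, (∫ y, φ y * ∫ l, Complex.exp (Complex.I * (⟪x - y, l⟫_ℝ : ℂ)) * (ρ l : ℂ))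
      = ∫ l, Complex.exp (Complex.I * (⟪x, l⟫_ℝ : ℂ)) * (Φ l * (ρ l : ℂ)) := by
    intro x
    rw [aux_swap h1 hρ' (fun y l => Complex.exp (Complex.I * (⟪x - y, l⟫_ℝ : ℂ)))
      (by simp only [Function.uncurry_def]; fun_prop) (fun y l => (aux_norm_exp _).le)]
    congr 1; ext l
    rw [hΦe, mul_comm (ρ l : ℂ), ← mul_assoc, ← integral_const_mul]
    congr 2; ext y
    rw [← mul_assoc, ← Complex.exp_add, inner_sub_left]
    congr 2
    push_cast; ring
  have hΦρ : Integrable (fun l => Φ l * (ρ l : ℂ)) :=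
    hρ'.bdd_mul hΦc.aestronglyMeasurable (Eventually.of_forall hΦb)
  have h1c : Integrable (fun x => starRingEnd ℂ (φ x)) :=
    (Complex.conjLIE.toContinuousLinearEquiv.toContinuousLinearMap).integrable_comp h1
  have hout : (∫ x, starRingEnd ℂ (φ x) * ∫ y, φ y *
      ∫ l, Complex.exp (Complex.I * (⟪x - y, l⟫_ℝ : ℂ)) * (ρ l : ℂ))
      = ∫ l, ((ρ l * ‖Φ l‖ ^ 2 : ℝ) : ℂ) := by
    simp_rw [hin]
    rw [aux_swap h1c hΦρ (fun x l => Complex.exp (Complex.I * (⟪x, l⟫_ℝ : ℂ)))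
      (by simp only [Function.uncurry_def]; fun_prop) (fun y l => (aux_norm_exp _).le)]
    congr 1; ext l
    have : (∫ x, Complex.exp (Complex.I * (⟪x, l⟫_ℝ : ℂ)) * starRingEnd ℂ (φ x))
        = starRingEnd ℂ (Φ l) := by
      rw [hΦe, ← integral_conj]
      congr 1; ext x
      rw [map_mul, ← Complex.exp_conj]
      simp
    rw [this]
    have h := Complex.mul_conj' (Φ l)
    push_cast
    rw [← h]; ring
  obtain ⟨p1, p2⟩ := aux_plancherel h1 h2
  have p3 : Integrable (fun l => ‖Φ l‖ ^ 2) :=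
    (integrable_comp_smul_iff volume (fun x => ‖𝓕 φ x‖ ^ 2) (inv_ne_zero hpi)).2 p1
  have p4 : ∫ l, ‖Φ l‖ ^ 2 = (2 * Real.pi) ^ Module.finrank ℝ V * ∫ x, ‖φ x‖ ^ 2 := by
    rw [← p2, ← smul_eq_mul, ← Measure.integral_comp_inv_smul_of_nonneg volume
      (fun x => ‖𝓕 φ x‖ ^ 2) (R := 2 * Real.pi) (by positivity)]
  rw [hout, integral_complex_ofReal, Complex.norm_real, Real.norm_eq_abs, abs_of_nonneg
    (integral_nonneg_of_ae (by filter_upwards [hρ0] with l hl; simp only [Pi.zero_apply]; positivity))]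
  calc ∫ l, ρ l * ‖Φ l‖ ^ 2 ≤ ∫ l, C * ‖Φ l‖ ^ 2 := by
        apply integral_mono_of_nonneg _ (p3.const_mul C)
        · filter_upwards [hρC] with l hl
          gcongr
        · filter_upwards [hρ0] with l hl
          simp only [Pi.zero_apply]; positivity
    _ = _ := by rw [integral_const_mul, p4]; ring

end Aux

/-- If `U` is a strongly continuous unitary representation of `ℝᵏ` on a complex Hilbert
space and `f` has absolutely continuous spectral measure with density `ρ` bounded by `C`
(expressed via `⟪f, U(x) f⟫ = ∫ e^{i x·λ} ρ(λ) dλ`), then for every `g`: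
`∫_{ℝᵏ} |⟪f, U(x) g⟫|² dx ≤ (2π)ᵏ C ‖g‖²`. -/
theorem smoothness_estimate
    {𝓗 : Type*} [NormedAddCommGroup 𝓗] [InnerProductSpace ℂ 𝓗]
    (k : ℕ)
    (U : EuclideanSpace ℝ (Fin k) → (𝓗 →L[ℂ] 𝓗))
    (hU0 : U 0 = 1)
    (hUadd : ∀ x y, U (x + y) = (U x).comp (U y))
    (hUunitary : ∀ x, ∀ v w : 𝓗, ⟪U x v, U x w⟫_ℂ = ⟪v, w⟫_ℂ)
    (hUcont : ∀ v : 𝓗, Continuous fun x => U x v)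
    (f : 𝓗) (C : ℝ) (hC : 0 ≤ C)
    (ρ : EuclideanSpace ℝ (Fin k) → ℝ)
    (hρint : Integrable ρ)
    (hρ0 : ∀ᵐ l ∂(volume : Measure (EuclideanSpace ℝ (Fin k))), 0 ≤ ρ l)
    (hρC : ∀ᵐ l ∂(volume : Measure (EuclideanSpace ℝ (Fin k))), ρ l ≤ C)
    (hspec : ∀ x, ⟪f, U x f⟫_ℂ =
      ∫ l, Complex.exp (Complex.I * (⟪x, l⟫_ℝ : ℂ)) * (ρ l : ℂ)) :
    ∀ g : 𝓗,
      ∫⁻ x, (‖⟪f, U x g⟫_ℂ‖₊ : ℝ≥0∞) ^ 2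
        ≤ ENNReal.ofReal ((2 * Real.pi) ^ k * C * ‖g‖ ^ 2) := by
  intro g
  set K : ℝ := (2 * Real.pi) ^ k * C with hK
  have hK0 : 0 ≤ K := by positivity
  have hnorm : ∀ x v, ‖U x v‖ = ‖v‖ := by
    intro x v
    have h := hUunitary x v v
    rw [inner_self_eq_norm_sq_to_K, inner_self_eq_norm_sq_to_K] at h
    have h' : ‖U x v‖ ^ 2 = ‖v‖ ^ 2 := by exact_mod_cast h
    exact (pow_left_inj₀ (norm_nonneg _) (norm_nonneg _) two_ne_zero).1 h'
  have hmove : ∀ x v w, ⟪U (-x) v, w⟫_ℂ = ⟪v, U x w⟫_ℂ := by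
    intro x v w
    rw [← hUunitary x, ← ContinuousLinearMap.comp_apply, ← hUadd, add_neg_cancel, hU0]
    rfl
  set h : EuclideanSpace ℝ (Fin k) → ℂ := fun x => ⟪f, U x g⟫_ℂ with hh
  have hhc : Continuous h := continuous_const.inner (hUcont g)
  have hhb : ∀ x, ‖h x‖ ≤ ‖f‖ * ‖g‖ := fun x =>
    (norm_inner_le_norm _ _).trans (by rw [hnorm])
  have key : ∀ n : ℕ, ∫⁻ x in Metric.closedBall (0 : EuclideanSpace ℝ (Fin k)) (n : ℝ),
      (‖h x‖₊ : ℝ≥0∞) ^ 2 ≤ ENNReal.ofReal (K * ‖g‖ ^ 2) := by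
    intro n
    set B := Metric.closedBall (0 : EuclideanSpace ℝ (Fin k)) (n : ℝ) with hB
    have hBm : MeasurableSet B := Metric.isClosed_closedBall.measurableSet
    have : IsFiniteMeasure (volume.restrict B) :=
      ⟨by rw [Measure.restrict_apply_univ]; exact measure_closedBall_lt_top⟩
    set φ : EuclideanSpace ℝ (Fin k) → ℂ := B.indicator h with hφ
    have hmem : ∀ p : ℝ≥0∞, MemLp φ p := fun p =>
      (memLp_indicator_iff_restrict hBm).2
        (MemLp.of_bound hhc.aestronglyMeasurable _ (Filter.Eventually.of_forall hhb))
    have h1 : Integrable φ := memLp_one_iff_integrable.1 (hmem 1)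
    set F : EuclideanSpace ℝ (Fin k) → UniformSpace.Completion 𝓗 :=
      fun x => ((U (-x) f : 𝓗) : UniformSpace.Completion 𝓗) with hF
    have hFc : Continuous F :=
      (UniformSpace.Completion.continuous_coe 𝓗).comp ((hUcont f).comp continuous_neg)
    have hFi : Integrable (fun x => φ x • F x) :=
      h1.smul_bdd ‖f‖ hFc.aestronglyMeasurable (Filter.Eventually.of_forall fun x => by
        simp only [hF, UniformSpace.Completion.norm_coe, hnorm]; exact le_rfl)
    set v := ∫ x, φ x • F x with hv
    set J := ∫ x, ‖φ x‖ ^ 2 with hJ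
    have hJ0 : 0 ≤ J := integral_nonneg fun x => by positivity
    have hvl : ∀ w, ⟪v, w⟫_ℂ = ∫ x, starRingEnd ℂ (φ x) * ⟪F x, w⟫_ℂ := by
      intro w
      rw [← inner_conj_symm, hv, ← integral_inner hFi, ← integral_conj]
      congr 1; ext x
      rw [inner_conj_symm, inner_smul_left]
    have hvr : ∀ w, ⟪w, v⟫_ℂ = ∫ x, φ x * ⟪w, F x⟫_ℂ := by
      intro w
      rw [hv, ← integral_inner hFi]
      simp_rw [inner_smul_right]
    have hvg : ⟪v, (g : UniformSpace.Completion 𝓗)⟫_ℂ = (J : ℂ) := by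
      rw [hvl, hJ, ← integral_complex_ofReal]
      congr 1; ext x
      simp only [hF, UniformSpace.Completion.inner_coe, hmove]
      by_cases hx : x ∈ B
      · simp only [hφ, Set.indicator_of_mem hx]
        rw [Complex.conj_mul']; simp
      · simp [hφ, Set.indicator_of_notMem hx]
    have hvv : ‖v‖ ^ 2 ≤ K * J := by
      have e : ⟪v, v⟫_ℂ = ∫ x, starRingEnd ℂ (φ x) * ∫ y, φ y *
          ∫ l, Complex.exp (Complex.I * (⟪x - y, l⟫_ℝ : ℂ)) * (ρ l : ℂ) := by
        rw [hvl]
        simp_rw [hvr, ← hspec]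
        congr 1; ext x; congr 2; ext y; congr 1
        simp only [hF, UniformSpace.Completion.inner_coe, hmove]
        rw [← ContinuousLinearMap.comp_apply, ← hUadd, sub_eq_add_neg]
      have q := aux_quad h1 (hmem 2) hρint hρ0 hρC
      rw [← e, inner_self_eq_norm_sq_to_K, finrank_euclideanSpace_fin] at q
      simpa using q
    have hJle : J ≤ ‖v‖ * ‖g‖ := by
      have := norm_inner_le_norm (𝕜 := ℂ) v (g : UniformSpace.Completion 𝓗)
      rw [hvg, UniformSpace.Completion.norm_coe, Complex.norm_real, Real.norm_eq_abs,
        abs_of_nonneg hJ0] at this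
      exact this
    have hJfin : J ≤ K * ‖g‖ ^ 2 := by
      rcases hJ0.eq_or_lt with h0 | h0
      · rw [← h0]; positivity
      · have : J * J ≤ J * (K * ‖g‖ ^ 2) := by
          calc J * J ≤ (‖v‖ * ‖g‖) * (‖v‖ * ‖g‖) := by gcongr
            _ = ‖v‖ ^ 2 * ‖g‖ ^ 2 := by ring
            _ ≤ (K * J) * ‖g‖ ^ 2 := by gcongr
            _ = _ := by ring
        exact le_of_mul_le_mul_left this h0
    have hL : ∫⁻ x in B, (‖h x‖₊ : ℝ≥0∞) ^ 2 = ENNReal.ofReal J := by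
      rw [hJ, ofReal_integral_eq_lintegral_ofReal ((hmem 2).integrable_norm_pow (by norm_num))
        (Filter.Eventually.of_forall fun x => by positivity), ← lintegral_indicator hBm]
      congr 1; ext x
      by_cases hx : x ∈ B
      · simp only [hφ, Set.indicator_of_mem hx]
        rw [ENNReal.ofReal_pow (norm_nonneg _), ofReal_norm]; rfl
      · simp [hφ, Set.indicator_of_notMem hx]
    rw [hL]
    exact ENNReal.ofReal_le_ofReal hJfin
  have ht := (aecover_closedBall (μ := (volume : Measure (EuclideanSpace ℝ (Fin k))))
    (x := 0) (tendsto_natCast_atTop_atTop (R := ℝ))).lintegral_tendsto_of_countably_generated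
    (f := fun x => (‖h x‖₊ : ℝ≥0∞) ^ 2)
    (by have := hhc.measurable; fun_prop)
  exact le_of_tendsto' ht key
end

section
/- Let 𝓗 be a complex Hilbert space and U a strongly continuous unitary representation of the additive group ℝᵏ⁺ˡ on 𝓗. Let f ∈ 𝓗, C ≥ 0, h₁, …, h_l > 0, and let ρ ∈ L¹(ℝᵏ⁺ˡ) be a nonnegative integrable function with ρ(λ) ≤ C almost everywhere and ρ vanishing almost everywhere outside ℝᵏ × ∏_{j=1}^{l} [−h_j, h_j], such that ⟪f, U(x) f⟫ = ∫_{ℝᵏ⁺ˡ} e^{i x·λ} ρ(λ) dλ for every x ∈ ℝᵏ⁺ˡ. Then for every g ∈ 𝓗: ∫_{ℝᵏ} |⟪f, U(x, 0) g⟫|² dx ≤ (2π)ᵏ (∏_{j=1}^{l} 2h_j) C ‖g‖², where (x,0) ∈ ℝᵏ × ℝˡ denotes the embedding of x ∈ ℝᵏ in the first k coordinates. -/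
open MeasureTheory
open scoped ENNReal NNReal InnerProductSpace

section helpers
open FourierTransform SchwartzMap

variable {E : Type*} [NormedAddCommGroup E] [InnerProductSpace ℝ E] [FiniteDimensional ℝ E]
  [MeasurableSpace E] [BorelSpace E]

theorem fourier_ae_eq_aux (φ : E → ℂ) (h1 : Integrable φ) (h2 : MemLp φ 2) :
    𝓕 φ =ᵐ[volume] (𝓕 (h2.toLp φ) : Lp (α := E) ℂ 2) := by
  apply ae_eq_of_integral_contDiff_smul_eq
  · exact (VectorFourier.fourierIntegral_continuous Real.continuous_fourierChar
      (by exact continuous_inner) h1).locallyIntegrable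
  · exact (Lp.memLp _).locallyIntegrable (by norm_num)
  intro g hg hgc
  have hg' : ContDiff ℝ ((⊤ : ℕ∞) : WithTop ℕ∞) (fun x => (g x : ℂ)) := Complex.ofRealCLM.contDiff.comp hg
  have hgc' : HasCompactSupport (fun x => (g x : ℂ)) := hgc.comp_left (g := Complex.ofReal) rfl
  let s : 𝓢(E, ℂ) := hgc'.toSchwartzMap hg'
  have hs : ∀ x, s x = (g x : ℂ) := fun x => rfl
  have e1 := congrArg (fun T : 𝓢'(E, ℂ) => T s) (Lp.fourier_toTemperedDistribution_eq (h2.toLp φ))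
  simp only [TemperedDistribution.fourier_apply, Lp.toTemperedDistribution_apply] at e1
  have e2 : ∫ x, (𝓕 s) x • (h2.toLp φ : E → ℂ) x = ∫ x, (𝓕 s) x • φ x := by
    apply integral_congr_ae
    filter_upwards [h2.coeFn_toLp] with x hx
    rw [hx]
  have e3 := VectorFourier.integral_fourierIntegral_smul_eq_flip (μ := (volume : Measure E))
    (ν := (volume : Measure E)) (L := innerₗ E) (f := s) (g := φ)
    Real.continuous_fourierChar (by exact continuous_inner) s.integrable h1
  rw [flip_innerₗ] at e3
  have e4 : ∫ x, (𝓕 s) x • φ x = ∫ x, s x • 𝓕 φ x := e3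
  rw [e2, e4] at e1
  simpa [hs] using e1

theorem plancherel_aux (φ : E → ℂ) (h1 : Integrable φ) (h2 : MemLp φ 2) :
    ∫⁻ x, ‖𝓕 φ x‖ₑ ^ 2 = ∫⁻ x, ‖φ x‖ₑ ^ 2 := by
  have key : eLpNorm (𝓕 φ) 2 volume = eLpNorm φ 2 volume := by
    rw [eLpNorm_congr_ae (fourier_ae_eq_aux φ h1 h2), ← Lp.enorm_def]
    have := Lp.norm_fourier_eq (h2.toLp φ)
    rw [← enorm_eq_iff_norm_eq] at this
    rw [this, Lp.enorm_toLp]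
  have := congrArg (fun t => t ^ 2) key
  have h (u : E → ℂ) : eLpNorm u 2 volume ^ 2 = ∫⁻ x, ‖u x‖ₑ ^ 2 := by
    rw [eLpNorm_eq_lintegral_rpow_enorm_toReal (by norm_num) (by norm_num)]
    rw [← ENNReal.rpow_natCast, ← ENNReal.rpow_mul]
    norm_num
  simpa [h] using this

theorem plancherel_scaled_aux {k : ℕ} (φ : EuclideanSpace ℝ (Fin k) → ℂ)
    (h1 : Integrable φ) (h2 : MemLp φ 2) :
    ∫⁻ w : EuclideanSpace ℝ (Fin k),
      ‖∫ x, Complex.exp (-(Complex.I * ((⟪x, w⟫_ℝ : ℝ) : ℂ))) * φ x‖ₑ ^ 2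
      = ENNReal.ofReal ((2 * Real.pi) ^ k) * ∫⁻ x, ‖φ x‖ₑ ^ 2 := by
  have hpi : (2 * Real.pi)⁻¹ ≠ 0 := by positivity
  have e : ∀ w : EuclideanSpace ℝ (Fin k),
      ∫ x, Complex.exp (-(Complex.I * ((⟪x, w⟫_ℝ : ℝ) : ℂ))) * φ x
        = 𝓕 φ ((2 * Real.pi)⁻¹ • w) := by
    intro w
    rw [Real.fourier_eq']
    congr 1; ext x
    rw [smul_eq_mul, inner_smul_right]
    congr 2
    push_cast
    have : (Real.pi : ℂ) ≠ 0 := by exact_mod_cast Real.pi_ne_zero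
    field_simp
  simp_rw [e]
  have hc : Continuous (𝓕 φ) := VectorFourier.fourierIntegral_continuous
    Real.continuous_fourierChar (by exact continuous_inner) h1
  have hm : Measurable fun x => ‖𝓕 φ x‖ₑ ^ 2 := by fun_prop
  rw [← lintegral_map (f := fun x => ‖𝓕 φ x‖ₑ ^ 2) (g := fun w => (2 * Real.pi)⁻¹ • w) hm
    (by fun_prop), Measure.map_addHaar_smul _ hpi, lintegral_smul_measure, plancherel_aux φ h1 h2]
  simp only [finrank_euclideanSpace, Fintype.card_fin, inv_pow, inv_inv, smul_eq_mul]
  rw [abs_of_nonneg (by positivity)]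

theorem density_aux {k l : ℕ} (C : ℝ) (h : Fin l → ℝ) (hh : ∀ j, 0 < h j)
    (ρ : EuclideanSpace ℝ (Fin k) × EuclideanSpace ℝ (Fin l) → ℝ)
    (hρ0 : ∀ᵐ lam ∂(volume : Measure (EuclideanSpace ℝ (Fin k) × EuclideanSpace ℝ (Fin l))),
      0 ≤ ρ lam)
    (hρC : ∀ᵐ lam ∂(volume : Measure (EuclideanSpace ℝ (Fin k) × EuclideanSpace ℝ (Fin l))),
      ρ lam ≤ C)
    (hρsupp : ∀ᵐ lam ∂(volume : Measure (EuclideanSpace ℝ (Fin k) × EuclideanSpace ℝ (Fin l))),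
      ρ lam ≠ 0 → ∀ j, |lam.2 j| ≤ h j)
    (G : EuclideanSpace ℝ (Fin k) → ℝ≥0∞) (hG : Measurable G) :
    ∫⁻ lam, G lam.1 * ‖ρ lam‖ₑ ≤ (∫⁻ x, G x) * ENNReal.ofReal ((∏ j, 2 * h j) * C) := by
  let B : Set (EuclideanSpace ℝ (Fin l)) := {y | ∀ j, |y j| ≤ h j}
  have hBeq : B = (WithLp.ofLp (p := 2)) ⁻¹' (Set.Icc (fun j => - h j) h) := by
    ext y
    simp [B, abs_le, Pi.le_def, forall_and]
  have hBm : MeasurableSet B := by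
    rw [hBeq]
    exact measurableSet_Icc.preimage (PiLp.volume_preserving_ofLp (Fin l)).measurable
  have hBv : volume B = ENNReal.ofReal (∏ j, 2 * h j) := by
    rw [hBeq, (PiLp.volume_preserving_ofLp (Fin l)).measure_preimage
      measurableSet_Icc.nullMeasurableSet, Real.volume_Icc_pi,
      ENNReal.ofReal_prod_of_nonneg (fun j _ => by linarith [hh j])]
    congr 1; ext j; congr 1; ring
  calc ∫⁻ lam, G lam.1 * ‖ρ lam‖ₑ
      ≤ ∫⁻ lam : EuclideanSpace ℝ (Fin k) × EuclideanSpace ℝ (Fin l),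
          G lam.1 * B.indicator (fun _ => ENNReal.ofReal C) lam.2 := by
        apply lintegral_mono_ae
        filter_upwards [hρ0, hρC, hρsupp] with w a b c
        gcongr
        by_cases hz : ρ w = 0
        · simp [hz]
        · rw [Set.indicator_of_mem (show w.2 ∈ B from c hz), Real.enorm_eq_ofReal a]
          exact ENNReal.ofReal_le_ofReal b
    _ = _ := by
        rw [Measure.volume_eq_prod, lintegral_prod_mul hG.aemeasurable
          (measurable_const.indicator hBm).aemeasurable, lintegral_indicator_const hBm, hBv,
          mul_comm (ENNReal.ofReal C), ENNReal.ofReal_mul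
            (Finset.prod_nonneg fun j _ => by linarith [hh j])]


theorem inner_left_aux {α H : Type*} [MeasurableSpace α] {μ : Measure α} [NormedAddCommGroup H]
    [InnerProductSpace ℂ H] [CompleteSpace H] (F : α → H) (hF : Integrable F μ) (g : H) :
    ⟪∫ x, F x ∂μ, g⟫_ℂ = ∫ x, ⟪F x, g⟫_ℂ ∂μ := by
  rw [← inner_conj_symm, ← integral_inner hF, ← integral_conj]
  simp only [inner_conj_symm]

theorem norm_sq_aux {k l : ℕ} {H : Type*} [NormedAddCommGroup H] [InnerProductSpace ℂ H]
    [CompleteSpace H] (Φ : EuclideanSpace ℝ (Fin k) → H)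
    (ψ : EuclideanSpace ℝ (Fin k) → ℂ) (hψ : Integrable ψ)
    (hψΦ : Integrable fun x => ψ x • Φ x)
    (ρ : EuclideanSpace ℝ (Fin k) × EuclideanSpace ℝ (Fin l) → ℝ) (hρint : Integrable ρ)
    (hspec : ∀ x y, ⟪Φ x, Φ y⟫_ℂ =
      ∫ lam, Complex.exp (Complex.I * ((⟪x - y, lam.1⟫_ℝ : ℝ) : ℂ)) * (ρ lam : ℂ)) :
    ‖∫ x, ψ x • Φ x‖ₑ ^ 2 ≤ ∫⁻ lam,
      ‖∫ x, Complex.exp (-(Complex.I * ((⟪x, lam.1⟫_ℝ : ℝ) : ℂ))) * ψ x‖ₑ ^ 2 * ‖ρ lam‖ₑ := by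
  set v := ∫ x, ψ x • Φ x with hv
  let e : EuclideanSpace ℝ (Fin k) → EuclideanSpace ℝ (Fin k) → ℂ :=
    fun x w => Complex.exp (-(Complex.I * ((⟪x, w⟫_ℝ : ℝ) : ℂ)))
  let A : EuclideanSpace ℝ (Fin k) → ℂ := fun w => ∫ x, e x w * ψ x
  have hee : ∀ x y w, Complex.exp (Complex.I * ((⟪x - y, w⟫_ℝ : ℝ) : ℂ))
      = (starRingEnd ℂ) (e x w) * e y w := by
    intro x y w
    simp only [e]
    rw [← Complex.exp_conj, ← Complex.exp_add, inner_sub_left]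
    congr 1
    simp
    ring
  have hen : ∀ x w, ‖e x w‖ = 1 := by
    intro x w
    simp only [e]
    rw [← mul_neg, mul_comm, ← Complex.ofReal_neg]
    exact Complex.norm_exp_ofReal_mul_I _
  let T : (EuclideanSpace ℝ (Fin k) × EuclideanSpace ℝ (Fin k)) →
      (EuclideanSpace ℝ (Fin k) × EuclideanSpace ℝ (Fin l)) → ℂ :=
    fun p w => (starRingEnd ℂ) (e p.1 w.1 * ψ p.1) * (e p.2 w.1 * ψ p.2) * (ρ w : ℂ)
  have hconj : Integrable fun x => (starRingEnd ℂ) (ψ x) :=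
    Complex.conjCLE.toContinuousLinearMap.integrable_comp hψ
  have hpp : Integrable (fun p : EuclideanSpace ℝ (Fin k) × EuclideanSpace ℝ (Fin k) =>
      (starRingEnd ℂ) (ψ p.1) * ψ p.2) := hconj.mul_prod hψ
  have hTint : Integrable (Function.uncurry T) := by
    have h0 := (hpp.mul_prod (hρint.ofReal (𝕜 := ℂ)))
    have h1 := h0.bdd_mul (c := 1) (f := fun q : (EuclideanSpace ℝ (Fin k) ×
        EuclideanSpace ℝ (Fin k)) × (EuclideanSpace ℝ (Fin k) × EuclideanSpace ℝ (Fin l)) =>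
        (starRingEnd ℂ) (e q.1.1 q.2.1) * e q.1.2 q.2.1)
      (by apply Continuous.aestronglyMeasurable; simp only [e]; fun_prop)
      (Filter.Eventually.of_forall fun q => by simp [hen])
    refine h1.congr (Filter.Eventually.of_forall fun q => ?_)
    simp only [T, Function.uncurry, map_mul]
    push_cast
    ring_nf
    simp
  have hinner : ⟪v, v⟫_ℂ = ∫ w, (starRingEnd ℂ) (A w.1) * A w.1 * (ρ w : ℂ) := by
    calc ⟪v, v⟫_ℂ = ∫ x, ⟪ψ x • Φ x, v⟫_ℂ := inner_left_aux _ hψΦ v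
      _ = ∫ x, ∫ y, ⟪ψ x • Φ x, ψ y • Φ y⟫_ℂ := by
          congr 1; ext x
          exact (integral_inner hψΦ _).symm
      _ = ∫ x, ∫ y, ∫ w, T (x, y) w := by
          congr 1; ext x; congr 1; ext y
          rw [inner_smul_left, inner_smul_right, hspec, ← integral_const_mul,
            ← integral_const_mul]
          congr 1; ext w
          simp only [T, hee, map_mul]
          ring
      _ = ∫ p, ∫ w, T p w := by
          rw [Measure.volume_eq_prod]
          exact (integral_prod _ hTint.integral_prod_left).symm
      _ = ∫ w, ∫ p, T p w := integral_integral_swap hTint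
      _ = _ := by
          congr 1; ext w
          simp only [T]
          rw [integral_mul_const, Measure.volume_eq_prod,
            integral_prod_mul (fun x => (starRingEnd ℂ) (e x w.1 * ψ x)) (fun y => e y w.1 * ψ y),
            integral_conj]
  calc ‖v‖ₑ ^ 2 = ‖⟪v, v⟫_ℂ‖ₑ := by
        rw [inner_self_eq_norm_sq_to_K, enorm_pow]
        congr 1
        exact enorm_eq_iff_norm_eq.2 (by simp)
    _ ≤ ∫⁻ w, ‖(starRingEnd ℂ) (A w.1) * A w.1 * (ρ w : ℂ)‖ₑ := by
        rw [hinner]; exact enorm_integral_le_lintegral_enorm _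
    _ = _ := by
        congr 1; ext w
        rw [enorm_mul, enorm_mul, pow_two]
        congr 1
        · congr 1
          exact enorm_eq_iff_norm_eq.2 (RCLike.norm_conj _)
        · exact enorm_eq_iff_norm_eq.2 (Complex.norm_real _)

theorem key_aux {k l : ℕ} {H : Type*} [NormedAddCommGroup H] [InnerProductSpace ℂ H]
    [CompleteSpace H] (Φ : EuclideanSpace ℝ (Fin k) → H) (hΦ : Continuous Φ) (c : ℝ)
    (hc : ∀ x, ‖Φ x‖ ≤ c) (C : ℝ) (h : Fin l → ℝ) (hh : ∀ j, 0 < h j)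
    (ρ : EuclideanSpace ℝ (Fin k) × EuclideanSpace ℝ (Fin l) → ℝ) (hρint : Integrable ρ)
    (hρ0 : ∀ᵐ lam ∂(volume : Measure (EuclideanSpace ℝ (Fin k) × EuclideanSpace ℝ (Fin l))),
      0 ≤ ρ lam)
    (hρC : ∀ᵐ lam ∂(volume : Measure (EuclideanSpace ℝ (Fin k) × EuclideanSpace ℝ (Fin l))),
      ρ lam ≤ C)
    (hρsupp : ∀ᵐ lam ∂(volume : Measure (EuclideanSpace ℝ (Fin k) × EuclideanSpace ℝ (Fin l))),
      ρ lam ≠ 0 → ∀ j, |lam.2 j| ≤ h j)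
    (hspec : ∀ x y, ⟪Φ x, Φ y⟫_ℂ =
      ∫ lam, Complex.exp (Complex.I * ((⟪x - y, lam.1⟫_ℝ : ℝ) : ℂ)) * (ρ lam : ℂ)) (g : H) :
    ∫⁻ x, ‖⟪Φ x, g⟫_ℂ‖ₑ ^ 2 ≤
      ENNReal.ofReal ((2 * Real.pi) ^ k) * ENNReal.ofReal ((∏ j, 2 * h j) * C) * ‖g‖ₑ ^ 2 := by
  set K := ENNReal.ofReal ((2 * Real.pi) ^ k) * ENNReal.ofReal ((∏ j, 2 * h j) * C) with hK
  let F : EuclideanSpace ℝ (Fin k) → ℂ := fun x => ⟪Φ x, g⟫_ℂ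
  have hF : Continuous F := by fun_prop
  have hFb : ∀ x, ‖F x‖ ≤ c * ‖g‖ := fun x =>
    (norm_inner_le_norm _ _).trans (by gcongr; exact hc x)
  have step : ∀ n : ℕ, ∫⁻ x in Metric.ball 0 n, ‖F x‖ₑ ^ 2 ≤ K * ‖g‖ₑ ^ 2 := by
    intro n
    let B : Set (EuclideanSpace ℝ (Fin k)) := Metric.ball 0 n
    have hB : MeasurableSet B := measurableSet_ball
    have hBf : volume B ≠ ∞ := measure_ball_lt_top.ne
    let ψ := B.indicator F
    have hψi (p : ℝ≥0∞) : MemLp ψ p := by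
      rw [memLp_indicator_iff_restrict hB]
      have : IsFiniteMeasure (volume.restrict B) := ⟨by simpa using hBf.lt_top⟩
      exact MemLp.of_bound hF.aestronglyMeasurable _ (Filter.Eventually.of_forall hFb)
    have hψ1 : Integrable ψ := memLp_one_iff_integrable.1 (hψi 1)
    have hψΦ : Integrable fun x => ψ x • Φ x :=
      hψ1.smul_bdd c hΦ.aestronglyMeasurable (Filter.Eventually.of_forall hc)
    set N := ∫⁻ x in B, ‖F x‖ₑ ^ 2 with hN
    have hNψ : ∫⁻ x, ‖ψ x‖ₑ ^ 2 = N := by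
      rw [hN, ← lintegral_indicator hB]
      congr 1; ext x
      by_cases hx : x ∈ B <;> simp [ψ, hx]
    have hNtop : N ≠ ∞ := by
      rw [← hNψ]
      have := (hψi 2).eLpNorm_lt_top
      rw [eLpNorm_lt_top_iff_lintegral_rpow_enorm_lt_top (by norm_num) (by norm_num)] at this
      simpa using this.ne
    set v := ∫ x, ψ x • Φ x with hv
    have hv2 : ‖v‖ₑ ^ 2 ≤ K * N := by
      refine (norm_sq_aux Φ ψ hψ1 hψΦ ρ hρint hspec).trans ?_
      refine (density_aux C h hh ρ hρ0 hρC hρsupp (fun w => ‖∫ x, Complex.exp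
        (-(Complex.I * ((⟪x, w⟫_ℝ : ℝ) : ℂ))) * ψ x‖ₑ ^ 2) ?_).trans ?_
      · have : StronglyMeasurable fun w : EuclideanSpace ℝ (Fin k) => ∫ x, Complex.exp
            (-(Complex.I * ((⟪x, w⟫_ℝ : ℝ) : ℂ))) * ψ x := by
          apply StronglyMeasurable.integral_prod_right'
            (f := fun p : EuclideanSpace ℝ (Fin k) × EuclideanSpace ℝ (Fin k) => Complex.exp
            (-(Complex.I * ((⟪p.2, p.1⟫_ℝ : ℝ) : ℂ))) * ψ p.2)
          apply StronglyMeasurable.mul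
          · exact Continuous.stronglyMeasurable (by fun_prop)
          · exact (hF.stronglyMeasurable.indicator hB).comp_measurable measurable_snd
        exact this.measurable.enorm.pow_const 2
      · rw [plancherel_scaled_aux ψ hψ1 (hψi 2), hNψ, hK]
        exact le_of_eq (by ring)
    have hvg : ‖⟪v, g⟫_ℂ‖ₑ = N := by
      have e1 : ⟪v, g⟫_ℂ = ∫ x, ⟪ψ x • Φ x, g⟫_ℂ := inner_left_aux _ hψΦ g
      have e2 : ∀ x, ⟪ψ x • Φ x, g⟫_ℂ = ((‖ψ x‖ ^ 2 : ℝ) : ℂ) := by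
        intro x
        rw [inner_smul_left]
        by_cases hx : x ∈ B
        · simp only [ψ, Set.indicator_of_mem hx]
          rw [show ⟪Φ x, g⟫_ℂ = F x from rfl, Complex.conj_mul']
          simp
        · simp [ψ, hx]
      simp_rw [e1, e2]
      rw [integral_complex_ofReal, ← ofReal_norm, Complex.norm_real,
        Real.norm_of_nonneg (integral_nonneg fun _ => by positivity),
        ofReal_integral_eq_lintegral_ofReal ((hψi 2).integrable_norm_pow (by norm_num))
          (Filter.Eventually.of_forall fun _ => by positivity), ← hNψ]
      congr 1; ext x
      rw [ENNReal.ofReal_pow (norm_nonneg _), ofReal_norm]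
    have hle : N ≤ ‖v‖ₑ * ‖g‖ₑ := by
      rw [← hvg]
      simp only [← ofReal_norm]
      rw [← ENNReal.ofReal_mul (norm_nonneg _)]
      exact ENNReal.ofReal_le_ofReal (norm_inner_le_norm _ _)
    by_cases hN0 : N = 0
    · rw [hN0]; exact zero_le
    rw [← ENNReal.mul_le_mul_iff_right hN0 hNtop]
    calc N * N ≤ (‖v‖ₑ * ‖g‖ₑ) * (‖v‖ₑ * ‖g‖ₑ) := mul_le_mul' hle hle
      _ = ‖v‖ₑ ^ 2 * ‖g‖ₑ ^ 2 := by ring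
      _ ≤ (K * N) * ‖g‖ₑ ^ 2 := by gcongr
      _ = _ := by ring
  have hU : (⋃ n : ℕ, Metric.ball (0 : EuclideanSpace ℝ (Fin k)) n) = Set.univ :=
    Metric.iUnion_ball_nat 0
  rw [← setLIntegral_univ, ← hU, setLIntegral_iUnion_of_directed]
  · exact iSup_le step
  · apply Monotone.directed_le
    intro a b hab
    exact Metric.ball_subset_ball (by exact_mod_cast hab)

end helpers

/-- Bounded-energy smoothness estimate: if `U` is a strongly continuous unitary
representation of `ℝᵏ⁺ˡ = ℝᵏ × ℝˡ` on a complex Hilbert space and `f` has absolutely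
continuous spectral measure with density `ρ ≤ C` supported in `ℝᵏ × ∏_j [−h_j, h_j]`
(expressed via `⟪f, U(x) f⟫ = ∫ e^{i x·λ} ρ(λ) dλ`), then for every `g`:
`∫_{ℝᵏ} |⟪f, U(x, 0) g⟫|² dx ≤ (2π)ᵏ (∏_j 2 h_j) C ‖g‖²`. -/
theorem smoothness_estimate_bounded_energy
    {𝓗 : Type*} [NormedAddCommGroup 𝓗] [InnerProductSpace ℂ 𝓗]
    (k l : ℕ)
    (U : EuclideanSpace ℝ (Fin k) × EuclideanSpace ℝ (Fin l) → (𝓗 →L[ℂ] 𝓗))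
    (hU0 : U 0 = 1)
    (hUadd : ∀ x y, U (x + y) = (U x).comp (U y))
    (hUunitary : ∀ x, ∀ v w : 𝓗, ⟪U x v, U x w⟫_ℂ = ⟪v, w⟫_ℂ)
    (hUcont : ∀ v : 𝓗, Continuous fun x => U x v)
    (f : 𝓗) (C : ℝ) (hC : 0 ≤ C)
    (h : Fin l → ℝ) (hh : ∀ j, 0 < h j)
    (ρ : EuclideanSpace ℝ (Fin k) × EuclideanSpace ℝ (Fin l) → ℝ)
    (hρint : Integrable ρ)
    (hρ0 : ∀ᵐ lam ∂(volume : Measure (EuclideanSpace ℝ (Fin k) × EuclideanSpace ℝ (Fin l))),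
      0 ≤ ρ lam)
    (hρC : ∀ᵐ lam ∂(volume : Measure (EuclideanSpace ℝ (Fin k) × EuclideanSpace ℝ (Fin l))),
      ρ lam ≤ C)
    (hρsupp : ∀ᵐ lam ∂(volume : Measure (EuclideanSpace ℝ (Fin k) × EuclideanSpace ℝ (Fin l))),
      ρ lam ≠ 0 → ∀ j, |lam.2 j| ≤ h j)
    (hspec : ∀ x, ⟪f, U x f⟫_ℂ =
      ∫ lam, Complex.exp (Complex.I * ((⟪x.1, lam.1⟫_ℝ + ⟪x.2, lam.2⟫_ℝ : ℝ) : ℂ)) * (ρ lam : ℂ)) :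
    ∀ g : 𝓗,
      ∫⁻ x : EuclideanSpace ℝ (Fin k), (‖⟪f, U (x, 0) g⟫_ℂ‖₊ : ℝ≥0∞) ^ 2
        ≤ ENNReal.ofReal ((2 * Real.pi) ^ k * (∏ j, 2 * h j) * C * ‖g‖ ^ 2) := by
  intro g
  let Φ : EuclideanSpace ℝ (Fin k) → UniformSpace.Completion 𝓗 :=
    fun x => ((U (-x, 0) f : 𝓗) : UniformSpace.Completion 𝓗)
  have hinv : ∀ x : EuclideanSpace ℝ (Fin k), ∀ w : 𝓗, ⟪U (-x, 0) f, w⟫_ℂ = ⟪f, U (x, 0) w⟫_ℂ := by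
    intro x w
    rw [← hUunitary (x, 0), ← ContinuousLinearMap.comp_apply, ← hUadd]
    simp [← Prod.zero_eq_mk, hU0]
  have hsub : ∀ x y : EuclideanSpace ℝ (Fin k), U (x, 0) (U (-y, 0) f) = U (x - y, 0) f := by
    intro x y
    rw [← ContinuousLinearMap.comp_apply, ← hUadd]
    simp [sub_eq_add_neg]
  have hnorm : ∀ x, ‖U x f‖ = ‖f‖ := by
    intro x
    rw [@norm_eq_sqrt_re_inner ℂ, @norm_eq_sqrt_re_inner ℂ _ _ _ _ f, hUunitary]
  have key := key_aux (l := l) Φ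
    ((UniformSpace.Completion.continuous_coe 𝓗).comp ((hUcont f).comp (by fun_prop)))
    ‖f‖ (fun x => by simp [Φ, hnorm]) C h hh ρ hρint hρ0 hρC hρsupp
    (by
      intro x y
      simp only [Φ]
      rw [UniformSpace.Completion.inner_coe, hinv, hsub, hspec]
      simp) (g : UniformSpace.Completion 𝓗)
  simp only [Φ, UniformSpace.Completion.inner_coe, hinv] at key
  have hP : 0 ≤ ∏ j, 2 * h j := Finset.prod_nonneg fun j _ => by linarith [hh j]
  refine le_trans (le_of_eq ?_) (key.trans (le_of_eq ?_))
  · rfl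
  · rw [← ofReal_norm, UniformSpace.Completion.norm_coe,
      ← ENNReal.ofReal_pow (norm_nonneg _), ← ENNReal.ofReal_mul (by positivity),
      ← ENNReal.ofReal_mul (by positivity)]
    congr 1; ring
end

section
/- For every compact set K ⊂ ℝˢ and every ε > 0 there exists b > 0 such that for every p ∈ K and every q ∈ ℝˢ with ω_p(q) ≥ 2·ω(p/2) + ε one has ‖∇ω_p(q)‖ ≥ b. That is, the gradient of ω_p is bounded below by a positive constant, uniformly for p in compact sets, on the region where the two-particle energy exceeds its minimum by at least ε. -/
/-- Gradient inequality for the convex function `√(m² + ‖x‖²)`. -/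
theorem omega_convex_aux {s : ℕ} (m : ℝ) (hm : 0 < m) (u a : EuclideanSpace ℝ (Fin s)) :
    Real.sqrt (m ^ 2 + ‖u‖ ^ 2) - Real.sqrt (m ^ 2 + ‖a‖ ^ 2) ≤
      inner ℝ ((Real.sqrt (m ^ 2 + ‖u‖ ^ 2))⁻¹ • u) (u - a) := by
  have hA : 0 < Real.sqrt (m ^ 2 + ‖u‖ ^ 2) := Real.sqrt_pos.2 (by positivity)
  have hA2 := Real.sq_sqrt (show 0 ≤ m ^ 2 + ‖u‖ ^ 2 by positivity)
  have h : m ^ 2 + inner ℝ u a ≤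
      Real.sqrt (m ^ 2 + ‖u‖ ^ 2) * Real.sqrt (m ^ 2 + ‖a‖ ^ 2) := by
    rw [← Real.sqrt_mul (by positivity)]
    refine le_trans (add_le_add_right (real_inner_le_norm u a) _) (Real.le_sqrt_of_sq_le ?_)
    nlinarith [sq_nonneg (m * (‖u‖ - ‖a‖))]
  rw [real_inner_smul_left, inner_sub_right, real_inner_self_eq_norm_sq, inv_mul_eq_div,
    le_div_iff₀ hA]
  nlinarith

theorem omega_upper_aux (m t : ℝ) (hm : 0 < m) (ht : 0 ≤ t) :
    Real.sqrt (m ^ 2 + t ^ 2) ≤ m + t := by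
  apply Real.sqrt_le_iff.2
  constructor
  · positivity
  · nlinarith [mul_nonneg hm.le ht]

/-- For every compact `K ⊂ ℝˢ` and every `ε > 0` there is `b > 0` such that for all
`p ∈ K` and all `q` with `ω_p(q) ≥ 2·ω(p/2) + ε`, the gradient
`∇ω_p(q) = (p/2 + q)/ω(p/2 + q) − (p/2 − q)/ω(p/2 − q)` satisfies `‖∇ω_p(q)‖ ≥ b`.
Here `ω(q) = √(m² + ‖q‖²)` and `ω_p(q) = ω(p/2 + q) + ω(p/2 − q)`. -/
theorem omega_p_gradient_lower_bound (s : ℕ) (hs : 1 ≤ s) (m : ℝ) (hm : 0 < m)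
    (ω : EuclideanSpace ℝ (Fin s) → ℝ)
    (hω : ∀ q, ω q = Real.sqrt (m ^ 2 + ‖q‖ ^ 2))
    (K : Set (EuclideanSpace ℝ (Fin s))) (hK : IsCompact K)
    (ε : ℝ) (hε : 0 < ε) :
    ∃ b > (0 : ℝ), ∀ p ∈ K, ∀ q : EuclideanSpace ℝ (Fin s),
      2 * ω ((1 / 2 : ℝ) • p) + ε ≤ ω ((1 / 2 : ℝ) • p + q) + ω ((1 / 2 : ℝ) • p - q) →
      b ≤ ‖(ω ((1 / 2 : ℝ) • p + q))⁻¹ • ((1 / 2 : ℝ) • p + q) -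
            (ω ((1 / 2 : ℝ) • p - q))⁻¹ • ((1 / 2 : ℝ) • p - q)‖ := by
  obtain ⟨P0, hP0⟩ := hK.isBounded.exists_norm_le
  obtain ⟨P, hPpos, hP⟩ : ∃ P : ℝ, 0 ≤ P ∧ ∀ p ∈ K, ‖p‖ ≤ P :=
    ⟨max P0 0, le_max_right _ _, fun p hp => (hP0 p hp).trans (le_max_left _ _)⟩
  have hR : 0 < P + m := by positivity
  refine ⟨min (1 / 2) (ε / (P + m)), lt_min (by norm_num) (by positivity), ?_⟩
  intro p hp q h
  have hpP := hP p hp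
  generalize ha : (1 / 2 : ℝ) • p = a at h ⊢
  have haP : ‖a‖ ≤ P / 2 := by
    rw [← ha, norm_smul]; norm_num; linarith
  have h1 := omega_convex_aux m hm (a + q) a
  have h2 := omega_convex_aux m hm (a - q) a
  rw [← hω, ← hω] at h1 h2
  have hA : 0 < ω (a + q) := by rw [hω]; exact Real.sqrt_pos.2 (by positivity)
  have hB : 0 < ω (a - q) := by rw [hω]; exact Real.sqrt_pos.2 (by positivity)
  have hA' : ω (a + q) ≤ m + (P / 2 + ‖q‖) := by
    rw [hω]
    have := omega_upper_aux m ‖a + q‖ hm (norm_nonneg _)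
    linarith [norm_add_le a q]
  have hB' : ω (a - q) ≤ m + (P / 2 + ‖q‖) := by
    rw [hω]
    have := omega_upper_aux m ‖a - q‖ hm (norm_nonneg _)
    linarith [norm_sub_le a q]
  generalize ω (a + q) = A at *
  generalize ω (a - q) = B at *
  rcases le_total ‖q‖ (P + m) with hq | hq
  · refine (min_le_right _ _).trans ?_
    have e : inner ℝ (A⁻¹ • (a + q) - B⁻¹ • (a - q)) q =
        inner ℝ (A⁻¹ • (a + q)) (a + q - a) + inner ℝ (B⁻¹ • (a - q)) (a - q - a) := by
      rw [add_sub_cancel_left, show a - q - a = -q by abel, inner_neg_right, inner_sub_left]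
      ring
    have h3 := real_inner_le_norm (A⁻¹ • (a + q) - B⁻¹ • (a - q)) q
    rw [div_le_iff₀ hR]
    have h4 := mul_le_mul_of_nonneg_left hq (norm_nonneg (A⁻¹ • (a + q) - B⁻¹ • (a - q)))
    linarith
  · refine (min_le_left _ _).trans ?_
    have hq0 : 0 < ‖q‖ := by linarith
    have e : A⁻¹ • (a + q) - B⁻¹ • (a - q) = (A⁻¹ + B⁻¹) • q - (B⁻¹ - A⁻¹) • a := by
      module
    rw [e]
    have iA : 0 < A⁻¹ := inv_pos.2 hA
    have iB : 0 < B⁻¹ := inv_pos.2 hB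
    have h3 := norm_sub_norm_le ((A⁻¹ + B⁻¹) • q) ((B⁻¹ - A⁻¹) • a)
    rw [norm_smul, norm_smul, Real.norm_of_nonneg (by positivity : 0 ≤ A⁻¹ + B⁻¹)] at h3
    have h4 : ‖B⁻¹ - A⁻¹‖ ≤ A⁻¹ + B⁻¹ := by
      rw [Real.norm_eq_abs, abs_le]; constructor <;> linarith
    have h5 : ‖B⁻¹ - A⁻¹‖ * ‖a‖ ≤ (A⁻¹ + B⁻¹) * (‖q‖ / 2) :=
      mul_le_mul h4 (by linarith) (norm_nonneg _) (by positivity)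
    have h6 : (2 * ‖q‖)⁻¹ ≤ A⁻¹ := inv_anti₀ hA (by linarith)
    have h7 : (2 * ‖q‖)⁻¹ ≤ B⁻¹ := inv_anti₀ hB (by linarith)
    have h8 : (2 * ‖q‖)⁻¹ * ‖q‖ = 1 / 2 := by field_simp
    nlinarith
end

section
/- For every f ∈ 𝓗 and every μ ∈ (0,∞)ⁿ one has the identity μ₁⋯μₙ · ∫_{ℝⁿ} ‖R(λ+iμ) f‖² dλ = πⁿ · ‖f‖², where the integration is over λ ∈ ℝⁿ with respect to Lebesgue measure. -/
open MeasureTheory Set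
open scoped ENNReal NNReal

/-- The product of resolvents `∏_{j} (H_j − λ_j − iμ_j)⁻¹` of a family of pairwise
commuting bounded self-adjoint operators. -/
noncomputable def resolventProd {𝓗 : Type*} [NormedAddCommGroup 𝓗] [InnerProductSpace ℂ 𝓗]
    (n : ℕ) (H : Fin n → (𝓗 →L[ℂ] 𝓗)) (lam mu : Fin n → ℝ) : 𝓗 →L[ℂ] 𝓗 :=
  (List.ofFn fun j =>
    Ring.inverse (H j - (((lam j : ℂ) + Complex.I * (mu j : ℂ)) • (1 : 𝓗 →L[ℂ] 𝓗)))).prod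

lemma rns_spec_ne {𝓗 : Type*} [NormedAddCommGroup 𝓗] [InnerProductSpace ℂ 𝓗] [CompleteSpace 𝓗]
    {H : 𝓗 →L[ℂ] 𝓗} (hsa : IsSelfAdjoint H) {m : ℝ} (hm : 0 < m) (x : ℝ) :
    ∀ z ∈ spectrum ℂ H, z - ((x : ℂ) + Complex.I * (m : ℂ)) ≠ 0 := by
  intro z hz h
  have h1 := congrArg Complex.im (hsa.mem_spectrum_eq_re hz)
  have h2 := congrArg Complex.im h
  simp at h1 h2
  linarith

lemma rns_cfc {𝓗 : Type*} [NormedAddCommGroup 𝓗] [InnerProductSpace ℂ 𝓗] [CompleteSpace 𝓗]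
    {H : 𝓗 →L[ℂ] 𝓗} (hsa : IsSelfAdjoint H) (x m : ℝ) :
    cfc (fun z : ℂ => z - ((x : ℂ) + Complex.I * (m : ℂ))) H
      = H - (((x : ℂ) + Complex.I * (m : ℂ)) • (1 : 𝓗 →L[ℂ] 𝓗)) := by
  have hn : IsStarNormal H := hsa.isStarNormal
  rw [cfc_sub (fun z : ℂ => z) (fun _ => _) H, cfc_id' ℂ H, cfc_const _ H,
    Algebra.algebraMap_eq_smul_one]

lemma rns_isUnit {𝓗 : Type*} [NormedAddCommGroup 𝓗] [InnerProductSpace ℂ 𝓗] [CompleteSpace 𝓗]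
    {H : 𝓗 →L[ℂ] 𝓗} (hsa : IsSelfAdjoint H) {m : ℝ} (hm : 0 < m) (x : ℝ) :
    IsUnit (H - (((x : ℂ) + Complex.I * (m : ℂ)) • (1 : 𝓗 →L[ℂ] 𝓗))) := by
  have hn : IsStarNormal H := hsa.isStarNormal
  rw [← rns_cfc hsa]
  exact (cfcUnits _ H (rns_spec_ne hsa hm x)).isUnit

lemma rns_cont {𝓗 : Type*} [NormedAddCommGroup 𝓗] [InnerProductSpace ℂ 𝓗] [CompleteSpace 𝓗]
    {H : 𝓗 →L[ℂ] 𝓗} (hsa : IsSelfAdjoint H) {m : ℝ} (hm : 0 < m) :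
    Continuous fun x : ℝ =>
      Ring.inverse (H - (((x : ℂ) + Complex.I * (m : ℂ)) • (1 : 𝓗 →L[ℂ] 𝓗))) := by
  rw [continuous_iff_continuousAt]
  intro x
  obtain ⟨u, hu⟩ := rns_isUnit hsa hm x
  have h := NormedRing.inverse_continuousAt u
  rw [hu] at h
  refine ContinuousAt.comp (f := fun x : ℝ =>
    H - (((x : ℂ) + Complex.I * (m : ℂ)) • (1 : 𝓗 →L[ℂ] 𝓗))) h ?_
  fun_prop

/-- The Poisson-type kernel. -/
noncomputable def rnsKer (m x : ℝ) (z : ℂ) : ℂ := ((((z.re - x) ^ 2 + m ^ 2)⁻¹ : ℝ) : ℂ)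

lemma rns_star_mul {𝓗 : Type*} [NormedAddCommGroup 𝓗] [InnerProductSpace ℂ 𝓗] [CompleteSpace 𝓗]
    {H : 𝓗 →L[ℂ] 𝓗} (hsa : IsSelfAdjoint H) {m : ℝ} (hm : 0 < m) (x : ℝ) :
    cfc (rnsKer m x) H =
      star (Ring.inverse (H - (((x : ℂ) + Complex.I * (m : ℂ)) • (1 : 𝓗 →L[ℂ] 𝓗)))) *
      Ring.inverse (H - (((x : ℂ) + Complex.I * (m : ℂ)) • (1 : 𝓗 →L[ℂ] 𝓗))) := by
  have hn : IsStarNormal H := hsa.isStarNormal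
  have hc : ContinuousOn (fun z : ℂ => (z - ((x : ℂ) + Complex.I * (m : ℂ)))⁻¹) (spectrum ℂ H) :=
    ContinuousOn.inv₀ (by fun_prop) (rns_spec_ne hsa hm x)
  rw [← rns_cfc hsa, ← cfc_inv _ H (rns_spec_ne hsa hm x), ← cfc_star, ← cfc_mul _ _ H hc.star hc]
  refine cfc_congr fun z hz => ?_
  have h1 := hsa.mem_spectrum_eq_re hz
  have h1' : z.im = 0 := by rw [h1]; simp
  simp only [rnsKer]
  rw [star_inv₀, ← mul_inv, Complex.star_def, ← Complex.normSq_eq_conj_mul_self, Complex.ofReal_inv]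
  congr 2
  rw [Complex.normSq_apply]
  simp [h1']
  ring

lemma rns_int_real {m : ℝ} (hm : 0 < m) (a : ℝ) :
    ∫ x : ℝ, ((a - x) ^ 2 + m ^ 2)⁻¹ = Real.pi / m := by
  refine (integral_sub_left_eq_self (fun y : ℝ => (y ^ 2 + m ^ 2)⁻¹) volume a).trans ?_
  have h2 : ∀ y : ℝ, (y ^ 2 + m ^ 2)⁻¹ = (m ^ 2)⁻¹ * (fun t : ℝ => (1 + t ^ 2)⁻¹) (y / m) := by
    intro y
    have : 0 < y ^ 2 + m ^ 2 := by positivity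
    have : 0 < m ^ 2 + y ^ 2 := by positivity
    field_simp
    ring
  simp_rw [h2]
  rw [integral_const_mul, Measure.integral_comp_div (fun t : ℝ => (1 + t ^ 2)⁻¹) m, integral_univ_inv_one_add_sq, abs_of_pos hm,
    smul_eq_mul]
  field_simp

lemma rns_cfc_int {𝓗 : Type*} [NormedAddCommGroup 𝓗] [InnerProductSpace ℂ 𝓗] [CompleteSpace 𝓗]
    {H : 𝓗 →L[ℂ] 𝓗} (hsa : IsSelfAdjoint H) {m : ℝ} (hm : 0 < m) :
    Integrable (fun x : ℝ => cfc (rnsKer m x) H) ∧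
    ∫ x : ℝ, cfc (rnsKer m x) H = ((Real.pi / m : ℝ) : ℂ) • (1 : 𝓗 →L[ℂ] 𝓗) := by
  have hn : IsStarNormal H := hsa.isStarNormal
  obtain ⟨M, hM⟩ := (spectrum.isCompact (𝕜 := ℂ) H).isBounded.exists_norm_le
  have hcont : ContinuousOn (Function.uncurry (rnsKer m)) (univ ×ˢ spectrum ℂ H) := by
    apply Continuous.continuousOn
    unfold Function.uncurry rnsKer
    refine Complex.continuous_ofReal.comp (Continuous.inv₀ (by fun_prop) ?_)
    intro p
    positivity
  set C : ℝ := 2 + (1 + 2 * M ^ 2) / m ^ 2 with hC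
  have hb : ∀ᵐ x : ℝ, ∀ z ∈ spectrum ℂ H, ‖rnsKer m x z‖ ≤ C * (1 + x ^ 2)⁻¹ := by
    refine .of_forall fun x z hz => ?_
    have h0 : 0 < (z.re - x) ^ 2 + m ^ 2 := by positivity
    have h1 : z.re ^ 2 ≤ M ^ 2 :=
      sq_le_sq' (by linarith [hM z hz, (abs_le.1 (Complex.abs_re_le_norm z)).1])
        (by linarith [hM z hz, (abs_le.1 (Complex.abs_re_le_norm z)).2])
    rw [rnsKer, Complex.norm_real, Real.norm_of_nonneg (by positivity), ← div_eq_mul_inv,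
      inv_eq_one_div, div_le_div_iff₀ h0 (by positivity)]
    have h2 : C * ((z.re - x) ^ 2 + m ^ 2) = 2 * (z.re - x) ^ 2 + 2 * m ^ 2 + (1 + 2 * M ^ 2)
        + (1 + 2 * M ^ 2) / m ^ 2 * (z.re - x) ^ 2 := by
      rw [hC]; field_simp; ring
    have h3 : 0 ≤ (1 + 2 * M ^ 2) / m ^ 2 * (z.re - x) ^ 2 := by positivity
    rw [h2]
    nlinarith [sq_nonneg (2 * z.re - x), sq_nonneg m]
  have hbi : HasFiniteIntegral (fun x : ℝ => C * (1 + x ^ 2)⁻¹) :=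
    (integrable_inv_one_add_sq.const_mul C).2
  refine ⟨integrable_cfc _ _ H hcont hb hbi, ?_⟩
  rw [← cfc_integral _ _ H hcont hb hbi]
  have : (fun r : ℂ => ∫ x : ℝ, rnsKer m x r) = fun _ => ((Real.pi / m : ℝ) : ℂ) := by
    funext r
    simp only [rnsKer]
    rw [integral_complex_ofReal, rns_int_real hm]
  rw [this, cfc_const _ H, Algebra.algebraMap_eq_smul_one]

lemma rns_one {𝓗 : Type*} [NormedAddCommGroup 𝓗] [InnerProductSpace ℂ 𝓗] [CompleteSpace 𝓗]
    {H : 𝓗 →L[ℂ] 𝓗} (hsa : IsSelfAdjoint H) {m : ℝ} (hm : 0 < m) (f : 𝓗) :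
    ∫⁻ x : ℝ, (‖Ring.inverse (H - (((x : ℂ) + Complex.I * (m : ℂ)) • (1 : 𝓗 →L[ℂ] 𝓗))) f‖₊
      : ℝ≥0∞) ^ 2 = ENNReal.ofReal (Real.pi / m) * (‖f‖₊ : ℝ≥0∞) ^ 2 := by
  obtain ⟨hi, he⟩ := rns_cfc_int hsa hm
  let L : (𝓗 →L[ℂ] 𝓗) →L[ℂ] ℂ := (innerSL ℂ f).comp (ContinuousLinearMap.apply ℂ 𝓗 f)
  have hL : ∀ A, L A = inner ℂ f (A f) := fun A => rfl
  have hk : ∀ x : ℝ, L (cfc (rnsKer m x) H) =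
      ((‖Ring.inverse (H - (((x : ℂ) + Complex.I * (m : ℂ)) • (1 : 𝓗 →L[ℂ] 𝓗))) f‖ ^ 2 : ℝ) : ℂ) := by
    intro x
    rw [hL, rns_star_mul hsa hm, ContinuousLinearMap.star_eq_adjoint,
      mul_apply_eq_comp, ContinuousLinearMap.adjoint_inner_right,
      inner_self_eq_norm_sq_to_K]
    simp
  have h1 := L.integral_comp_comm hi
  have h2 := L.integrable_comp hi
  rw [he] at h1
  simp_rw [hk] at h1 h2
  rw [integral_complex_ofReal, hL] at h1
  have h3 := h2.re
  simp only [RCLike.re_to_complex, Complex.ofReal_re] at h3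
  have h4 := ofReal_integral_eq_lintegral_ofReal h3 (.of_forall fun x => by positivity)
  have h5 : inner ℂ f ((((Real.pi / m : ℝ) : ℂ) • (1 : 𝓗 →L[ℂ] 𝓗)) f)
      = ((Real.pi / m * ‖f‖ ^ 2 : ℝ) : ℂ) := by
    rw [smul_apply, inner_smul_right, one_apply_eq_self,
      inner_self_eq_norm_sq_to_K]
    simp
  rw [h5] at h1
  have h6 := Complex.ofReal_injective h1
  rw [h6, ENNReal.ofReal_mul (by positivity), ENNReal.ofReal_pow (norm_nonneg _)] at h4
  rw [← enorm_eq_nnnorm, ← ofReal_norm, h4]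
  refine lintegral_congr fun x => ?_
  rw [← enorm_eq_nnnorm, ← ofReal_norm, ENNReal.ofReal_pow (norm_nonneg _)]

lemma rns_succ {𝓗 : Type*} [NormedAddCommGroup 𝓗] [InnerProductSpace ℂ 𝓗]
    (n : ℕ) (H : Fin (n + 1) → (𝓗 →L[ℂ] 𝓗)) (lam mu : Fin (n + 1) → ℝ) :
    resolventProd (n + 1) H lam mu =
      Ring.inverse (H 0 - (((lam 0 : ℂ) + Complex.I * (mu 0 : ℂ)) • (1 : 𝓗 →L[ℂ] 𝓗))) *
      resolventProd n (fun j => H j.succ) (fun j => lam j.succ) (fun j => mu j.succ) := by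
  simp [resolventProd, List.ofFn_succ]

lemma rns_cont_prod {𝓗 : Type*} [NormedAddCommGroup 𝓗] [InnerProductSpace ℂ 𝓗] [CompleteSpace 𝓗]
    (n : ℕ) (H : Fin n → (𝓗 →L[ℂ] 𝓗)) (hsa : ∀ j, IsSelfAdjoint (H j))
    (mu : Fin n → ℝ) (hmu : ∀ j, 0 < mu j) :
    Continuous fun lam : Fin n → ℝ => resolventProd n H lam mu := by
  induction n with
  | zero => simp only [resolventProd, List.ofFn_zero, List.prod_nil]; exact continuous_const
  | succ n ih =>
    simp_rw [rns_succ]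
    refine Continuous.mul ((rns_cont (hsa 0) (hmu 0)).comp (continuous_apply 0)) ?_
    exact (ih (fun j => H j.succ) (fun j => hsa _) _ (fun j => hmu _)).comp (by fun_prop)

lemma rns_main {𝓗 : Type*} [NormedAddCommGroup 𝓗] [InnerProductSpace ℂ 𝓗] [CompleteSpace 𝓗]
    (n : ℕ) (H : Fin n → (𝓗 →L[ℂ] 𝓗)) (hsa : ∀ j, IsSelfAdjoint (H j))
    (f : 𝓗) (mu : Fin n → ℝ) (hmu : ∀ j, 0 < mu j) :
    ∫⁻ lam : Fin n → ℝ, (‖resolventProd n H lam mu f‖₊ : ℝ≥0∞) ^ 2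
      = ENNReal.ofReal (∏ j, Real.pi / mu j) * (‖f‖₊ : ℝ≥0∞) ^ 2 := by
  induction n with
  | zero =>
    rw [volume_pi, Measure.pi_of_empty]
    simp [resolventProd]
  | succ n ih =>
    have hc := rns_cont_prod (n + 1) H hsa mu hmu
    have hm : Measurable fun lam : Fin (n + 1) → ℝ =>
        (‖resolventProd (n + 1) H lam mu f‖₊ : ℝ≥0∞) ^ 2 := by
      have : Continuous fun lam : Fin (n + 1) → ℝ => ‖resolventProd (n + 1) H lam mu f‖₊ := by
        fun_prop
      exact (this.measurable.coe_nnreal_ennreal).pow_const 2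
    have e := (volume_preserving_piFinSuccAbove (fun _ : Fin (n + 1) => ℝ) 0).symm
    rw [← e.lintegral_comp hm, Measure.volume_eq_prod]
    refine (lintegral_prod_symm _ (hm.comp e.measurable).aemeasurable).trans ?_
    simp only [Function.comp_apply]
    simp only [MeasurableEquiv.piFinSuccAbove_symm_apply, rns_succ, Fin.insertNthEquiv_apply,
      Fin.insertNth_zero', Fin.cons_zero, Fin.cons_succ, mul_apply_eq_comp]
    simp_rw [rns_one (hsa 0) (hmu 0)]
    rw [lintegral_const_mul' _ _ ENNReal.ofReal_ne_top,
      ih (fun j => H j.succ) (fun j => hsa _) _ (fun j => hmu _), Fin.prod_univ_succ,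
      ENNReal.ofReal_mul (by have := hmu 0; positivity), mul_assoc]

/-- For pairwise commuting bounded self-adjoint operators `H₁, …, Hₙ`, every `f` and
`μ ∈ (0,∞)ⁿ`: `μ₁⋯μₙ ∫_{ℝⁿ} ‖R(λ+iμ) f‖² dλ = πⁿ ‖f‖²`. -/
theorem resolvent_norm_sq_integral
    {𝓗 : Type*} [NormedAddCommGroup 𝓗] [InnerProductSpace ℂ 𝓗] [CompleteSpace 𝓗]
    (n : ℕ) (H : Fin n → (𝓗 →L[ℂ] 𝓗))
    (hsa : ∀ j, IsSelfAdjoint (H j))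
    (hcomm : ∀ i j, Commute (H i) (H j))
    (f : 𝓗) (mu : Fin n → ℝ) (hmu : ∀ j, 0 < mu j) :
    ENNReal.ofReal (∏ j, mu j) *
        ∫⁻ lam : Fin n → ℝ, (‖resolventProd n H lam mu f‖₊ : ℝ≥0∞) ^ 2
      = ENNReal.ofReal (Real.pi ^ n * ‖f‖ ^ 2) := by
  have hpos : 0 < ∏ j, mu j := Finset.prod_pos fun j _ => hmu j
  rw [rns_main n H hsa f mu hmu, ← mul_assoc, ← ENNReal.ofReal_mul hpos.le,
    Finset.prod_div_distrib, Finset.prod_const, Finset.card_univ, Fintype.card_fin,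
    mul_div_cancel₀ _ hpos.ne', ENNReal.ofReal_mul (by positivity),
    ENNReal.ofReal_pow (norm_nonneg _), ofReal_norm, enorm_eq_nnnorm]
end
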